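/- Let X = (X_t)_{t≥0} be a real-valued additive process (X_0 = 0, independent increments, continuous in probability, cadlag paths) with E[X_t] = 0 and E[|X_t|^n] < ∞ for all n ≥ 1 and t ≥ 0. Then for every even n ≥ 2 the cumulant function t ↦ F_n(t) is monotone nondecreasing on [0, ∞). -/

import Mathlib

open MeasureTheory ProbabilityTheory Filter Topology
open scoped NNReal

/-- The Kendall polynomials `Γ_n`, expressing moments in terms of cumulants:
`Γ_0 = 1` and `Γ_{n+1}(x_1,…,x_{n+1}) = Σ_{j=0}^n C(n,j) Γ_j(x_1,…,x_j) x_{n+1-j}`.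
The argument function `x : ℕ → ℝ` encodes the variables `x_1, x_2, …`
(only the values `x 1, …, x n` are used by `kendall n x`). -/
noncomputable def kendall : ℕ → (ℕ → ℝ) → ℝ
  | 0, _ => 1
  | n + 1, x =>
      ∑ j ∈ (Finset.range (n + 1)).attach,
        (n.choose j.1 : ℝ) * kendall j.1 x * x (n + 1 - j.1)
decreasing_by exact Finset.mem_range.mp j.2

/-- A function `f : ℝ≥0 → ℝ` is cadlag: right-continuous with left limits. -/
def IsCadlag (f : ℝ≥0 → ℝ) : Prop :=
  (∀ t : ℝ≥0, ContinuousWithinAt f (Set.Ici t) t) ∧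
    ∀ t : ℝ≥0, 0 < t → ∃ l : ℝ, Tendsto f (𝓝[<] t) (𝓝 l)

/-!
For `s ≤ t` the independence of `X s` and `X t - X s` makes `F k t - F k s` the cumulants of the
increment. Let `d` be the sum of its second and `n`-th moments, which bounds all its moments of
order `2, …, n`. Up to the `n`-th moment itself, its `n`-th cumulant is a sum of products of at
least two of these moments, so `F n t - F n s ≥ -C * d ^ 2` whenever `d ≤ 1`. On the other hand even
moments are superadditive over centered independent summands, up to a constant, so `d` is bounded by
a multiple of the increase of `m t = E[X_t ^ 2] + E[X_t ^ n]`. As `d` tends to `0` when `s` and `t`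
merge, the function `F n + ε * m` is locally nondecreasing for every `ε > 0`; let `ε` tend to `0`.
-/

section Kendall

open Finset.HasAntidiagonal (antidiagonal mem_antidiagonal)

theorem kendall_zero (x : ℕ → ℝ) : kendall 0 x = 1 := by
  rw [kendall]

theorem kendall_succ (n : ℕ) (x : ℕ → ℝ) :
    kendall (n + 1) x =
      ∑ j ∈ Finset.range (n + 1), (n.choose j : ℝ) * kendall j x * x (n + 1 - j) := by
  rw [kendall]
  exact Finset.sum_attach (Finset.range (n + 1))
    fun j => (n.choose j : ℝ) * kendall j x * x (n + 1 - j)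

theorem kendall_one (x : ℕ → ℝ) : kendall 1 x = x 1 := by
  simp [kendall_succ, kendall_zero]

theorem kendall_succ_sub (n : ℕ) (x : ℕ → ℝ) :
    kendall (n + 1) x - x (n + 1) =
      ∑ j ∈ Finset.range n, (n.choose (j + 1) : ℝ) * kendall (j + 1) x * x (n - j) := by
  rw [kendall_succ, Finset.sum_range_succ']
  simp [kendall_zero]

theorem exists_abs_kendall_sub_le {n : ℕ} (hn : n ≠ 0) :
    ∃ C : ℝ, ∀ (x : ℕ → ℝ) (d : ℝ), d ≤ 1 →
      (∀ k, 1 ≤ k → k ≤ n → |kendall k x| ≤ d) → |kendall n x - x n| ≤ C * d ^ 2 := by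
  induction n using Nat.strong_induction_on with
  | _ n ih =>
    obtain ⟨n, rfl⟩ := Nat.exists_eq_succ_of_ne_zero hn
    choose! C hC using ih
    refine ⟨∑ j ∈ Finset.range n, (n.choose (j + 1) : ℝ) * (1 + |C (n - j)|), ?_⟩
    intro x d hd hx
    have hd0 : 0 ≤ d := (abs_nonneg _).trans (hx 1 le_rfl (by omega))
    have abs_le : ∀ k, 1 ≤ k → k ≤ n → |x k| ≤ (1 + |C k|) * d := fun k hk hkn => by
      have hrem := hC k (by omega) (by omega) x d hd fun j hj hjk => hx j hj (by omega)
      calc |x k| ≤ |kendall k x| + |kendall k x - x k| := by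
            simpa using abs_sub (kendall k x) (kendall k x - x k)
        _ ≤ d + |C k| * d := by
            gcongr
            · exact hx k hk (by omega)
            · refine hrem.trans (mul_le_mul (le_abs_self _) ?_ (sq_nonneg d) (abs_nonneg _))
              nlinarith
        _ = (1 + |C k|) * d := by ring
    rw [Nat.succ_eq_add_one, kendall_succ_sub, Finset.sum_mul]
    refine (Finset.abs_sum_le_sum_abs _ _).trans (Finset.sum_le_sum fun j hj => ?_)
    have hjn : j < n := Finset.mem_range.mp hj
    calc |(n.choose (j + 1) : ℝ) * kendall (j + 1) x * x (n - j)|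
        = n.choose (j + 1) * |kendall (j + 1) x| * |x (n - j)| := by
          rw [abs_mul, abs_mul, Nat.abs_cast]
      _ ≤ n.choose (j + 1) * d * ((1 + |C (n - j)|) * d) := by
          gcongr
          · exact hx (j + 1) (by omega) (by omega)
          · exact abs_le (n - j) (by omega) (by omega)
      _ = n.choose (j + 1) * (1 + |C (n - j)|) * d ^ 2 := by ring

/-- The exponential generating function `∑ aₙ Tⁿ / n!` of the sequence `a`. It turns the recurrence
defining the Kendall polynomials into a linear differential equation. -/
noncomputable def egf {K : Type*} [Field K] (a : ℕ → K) : PowerSeries K :=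
  PowerSeries.mk fun n => a n / (n.factorial : K)

section Egf

variable {K : Type*} [Field K]

theorem constantCoeff_egf (a : ℕ → K) : PowerSeries.constantCoeff (egf a) = a 0 := by
  simp [egf, ← PowerSeries.coeff_zero_eq_constantCoeff_apply]

theorem egf_add (a b : ℕ → K) : egf (a + b) = egf a + egf b := by
  ext n
  simp [egf, add_div]

variable [CharZero K]

theorem egf_injective : Function.Injective (egf : (ℕ → K) → PowerSeries K) := by
  intro a b hab
  funext n
  have hcoeff := congrArg (PowerSeries.coeff n) hab
  simpa [egf, div_left_inj', Nat.factorial_ne_zero] using hcoeff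

theorem egf_mul (a b : ℕ → K) :
    egf a * egf b =
      egf fun n => ∑ p ∈ antidiagonal n, (n.choose p.1 : K) * (a p.1 * b p.2) := by
  ext n
  simp only [egf, PowerSeries.coeff_mk, PowerSeries.coeff_mul, Finset.sum_div]
  refine Finset.sum_congr rfl fun p hp => ?_
  rw [← mem_antidiagonal.mp hp, Nat.cast_add_choose]
  have := fun m : ℕ => Nat.cast_ne_zero (R := K).mpr m.factorial_ne_zero
  field_simp [this]

theorem derivative_egf (a : ℕ → K) :
    PowerSeries.derivative K (egf a) = egf fun n => a (n + 1) := by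
  ext n
  have hsucc : (n + 1 : K) ≠ 0 := Nat.cast_add_one_ne_zero n
  simp only [egf, PowerSeries.coeff_derivative, PowerSeries.coeff_mk, Nat.factorial_succ]
  push_cast
  field_simp

end Egf

theorem eq_of_derivative_eq_mul {R : Type*} [CommRing R] [IsAddTorsionFree R]
    {f g h : PowerSeries R}
    (hf : PowerSeries.derivative R f = f * h) (hg : PowerSeries.derivative R g = g * h)
    (h0 : PowerSeries.constantCoeff f = PowerSeries.constantCoeff g) : f = g := by
  ext n
  induction n using Nat.strong_induction_on with
  | _ n ih =>
    cases n with
    | zero => simpa using h0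
    | succ n =>
      have hsum : PowerSeries.coeff n (f * h) = PowerSeries.coeff n (g * h) := by
        simp only [PowerSeries.coeff_mul]
        refine Finset.sum_congr rfl fun p hp => ?_
        rw [ih p.1 (Nat.lt_succ_of_le (Finset.HasAntidiagonal.antidiagonal.fst_le hp))]
      rw [← hf, ← hg, PowerSeries.coeff_derivative, PowerSeries.coeff_derivative] at hsum
      refine nsmul_right_injective n.succ_ne_zero ?_
      simpa [nsmul_eq_mul, mul_comm] using hsum

theorem derivative_egf_kendall (x : ℕ → ℝ) :
    PowerSeries.derivative ℝ (egf fun n => kendall n x) =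
      egf (fun n => kendall n x) * egf fun n => x (n + 1) := by
  rw [derivative_egf, egf_mul]
  congr 1
  funext n
  rw [kendall_succ, Finset.Nat.sum_antidiagonal_eq_sum_range_succ_mk]
  refine Finset.sum_congr rfl fun j hj => ?_
  rw [mul_assoc, Nat.sub_add_comm (Nat.le_of_lt_succ (Finset.mem_range.mp hj))]

theorem kendall_add (n : ℕ) (x y : ℕ → ℝ) :
    kendall n (x + y) =
      ∑ p ∈ antidiagonal n, (n.choose p.1 : ℝ) * (kendall p.1 x * kendall p.2 y) := by
  suffices h : egf (fun n => kendall n (x + y)) =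
      egf (fun n => kendall n x) * egf fun n => kendall n y by
    rw [egf_mul] at h
    exact congrFun (egf_injective h) n
  refine eq_of_derivative_eq_mul
    (h := egf (fun n => x (n + 1)) + egf fun n => y (n + 1)) ?_ ?_ ?_
  · rw [derivative_egf_kendall, ← egf_add]
    rfl
  · rw [Derivation.leibniz, derivative_egf_kendall, derivative_egf_kendall]
    simp only [smul_eq_mul]
    ring
  · simp [constantCoeff_egf, kendall_zero]

theorem eq_of_sum_antidiagonal_choose_mul_eq {R : Type*} [CommRing R] {a b c : ℕ → R} {n : ℕ}
    (ha : a 0 = 1)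
    (h : ∀ k ≤ n, ∑ p ∈ antidiagonal k, (k.choose p.1 : R) * (a p.1 * b p.2) =
      ∑ p ∈ antidiagonal k, (k.choose p.1 : R) * (a p.1 * c p.2)) :
    ∀ k ≤ n, b k = c k := by
  intro k
  induction k using Nat.strong_induction_on with
  | _ k ih =>
    intro hk
    have hmem : (0, k) ∈ antidiagonal k := by simp
    have hlower : ∀ p ∈ (antidiagonal k).erase (0, k), b p.2 = c p.2 := by
      rintro ⟨i, j⟩ hp
      obtain ⟨hne, hsum⟩ : ¬(i = 0 ∧ j = k) ∧ i + j = k := by simpa using hp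
      exact ih j (by omega) (by omega)
    have hk_eq := h k hk
    rw [← Finset.add_sum_erase _ _ hmem, ← Finset.add_sum_erase _ _ hmem,
      Finset.sum_congr rfl fun p hp => by rw [hlower p hp]] at hk_eq
    simpa [ha] using add_right_cancel hk_eq

end Kendall

theorem monotone_of_eventually_nhdsLT_of_eventually_nhdsGT {α β : Type*}
    [ConditionallyCompleteLinearOrder α] [TopologicalSpace α] [OrderTopology α] [DenselyOrdered α]
    [Preorder β] {f : α → β} (hlt : ∀ t, ∀ᶠ s in 𝓝[<] t, f s ≤ f t)
    (hgt : ∀ t, ∀ᶠ s in 𝓝[>] t, f t ≤ f s) : Monotone f := by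
  intro a b hab
  have le_of_forall_Ico : ∀ c, a ≤ c → (∀ y ∈ Set.Ico a c, f a ≤ f y) → f a ≤ f c := by
    intro c hac hc
    rcases hac.eq_or_lt with rfl | hac
    · exact le_rfl
    · have : (𝓝[<] c).NeBot := nhdsLT_neBot_of_exists_lt ⟨a, hac⟩
      obtain ⟨s, hfs, hs⟩ := ((hlt c).and (Ioo_mem_nhdsLT hac)).exists
      exact (hc s ⟨hs.1.le, hs.2⟩).trans hfs
  let S : Set α := {x | ∀ y ∈ Set.Icc a x, f a ≤ f y}
  have hclosed : IsClosed S := by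
    refine isClosed_iff_frequently.mpr fun x hx y hy => ?_
    have below : ∀ z ∈ Set.Ico a x, f a ≤ f z := fun z hz => by
      obtain ⟨w, hwS, hzw⟩ := (hx.and_eventually (lt_mem_nhds hz.2)).exists
      exact hwS z ⟨hz.1, hzw.le⟩
    exact le_of_forall_Ico y hy.1 fun z hz => below z ⟨hz.1, hz.2.trans_le hy.2⟩
  have ha : a ∈ S := fun y hy => (le_antisymm hy.2 hy.1) ▸ le_rfl
  refine (hclosed.inter isClosed_Icc).mem_of_ge_of_forall_exists_gt ha hab ?_ b ⟨hab, le_rfl⟩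
  rintro x ⟨hxS, hax, hxb⟩
  obtain ⟨u, hxu, hu⟩ := (mem_nhdsGT_iff_exists_mem_Ioc_Ioo_subset hxb).mp (hgt x)
  obtain ⟨w, hxw, hwu⟩ := exists_between hxu.1
  refine ⟨w, fun y hy => ?_, hxw, hwu.le.trans hxu.2⟩
  rcases le_or_gt y x with hyx | hxy
  · exact hxS y ⟨hy.1, hyx⟩
  · exact (hxS x ⟨hax, le_rfl⟩).trans (hu ⟨hxy, hy.2.trans_lt hwu⟩)

theorem add_mul_sub_le_of_convexOn_of_hasDerivAt {S : Set ℝ} {f : ℝ → ℝ} {f' x y : ℝ}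
    (hf : ConvexOn ℝ S f) (hx : x ∈ S) (hy : y ∈ S) (hf' : HasDerivAt f f' x) :
    f x + f' * (y - x) ≤ f y := by
  rcases lt_trichotomy y x with hyx | rfl | hxy
  · have hslope := hf.slope_le_of_hasDerivAt hy hx hyx hf'
    rw [slope_def_field, div_le_iff₀ (sub_pos.mpr hyx)] at hslope
    linarith
  · simp
  · have hslope := hf.le_slope_of_hasDerivAt hx hy hxy hf'
    rw [slope_def_field, le_div_iff₀ (sub_pos.mpr hxy)] at hslope
    linarith

theorem two_mul_pow_add_two_mul_pow_le {n : ℕ} (hn : Even n) (hn0 : n ≠ 0) (u v : ℝ) :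
    2 * u ^ n + 2 * v ^ n ≤ (u + v) ^ n + (u - v) ^ n := by
  obtain ⟨k, rfl⟩ := even_iff_two_dvd.mp hn
  obtain ⟨k, rfl⟩ := Nat.exists_eq_add_one_of_ne_zero (right_ne_zero_of_mul hn0)
  simp only [pow_mul]
  have hpow_mean : (2 * (u ^ 2 + v ^ 2)) ^ (k + 1) ≤
      2 ^ k * (((u + v) ^ 2) ^ (k + 1) + ((u - v) ^ 2) ^ (k + 1)) := by
    have := add_pow_le (sq_nonneg (u + v)) (sq_nonneg (u - v)) (k + 1)
    rwa [show (u + v) ^ 2 + (u - v) ^ 2 = 2 * (u ^ 2 + v ^ 2) by ring, Nat.add_sub_cancel] at this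
  rw [mul_pow, pow_succ 2 k, mul_assoc] at hpow_mean
  have hpow_add := pow_add_pow_le (sq_nonneg u) (sq_nonneg v) (k.add_one_ne_zero)
  exact (by linarith : _ ≤ 2 * (u ^ 2 + v ^ 2) ^ (k + 1)).trans
    (le_of_mul_le_mul_left hpow_mean (by positivity))

-- Clarkson's inequality for `z + y / 2` and `y / 2`, where the tangent line at `z` bounds
-- `(z + y / 2) ^ n` from below.
theorem pow_add_mul_add_pow_div_two_pow_le {n : ℕ} (hn : Even n) (hn0 : n ≠ 0) (z y : ℝ) :
    z ^ n + n * (z ^ (n - 1) * y) + y ^ n / 2 ^ n ≤ (z + y) ^ n := by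
  have hclarkson := two_mul_pow_add_two_mul_pow_le hn hn0 (z + y / 2) (y / 2)
  have htangent : z ^ n + n * z ^ (n - 1) * (z + y / 2 - z) ≤ (z + y / 2) ^ n :=
    add_mul_sub_le_of_convexOn_of_hasDerivAt hn.convexOn_pow (Set.mem_univ z) (Set.mem_univ _)
      (hasDerivAt_pow n z)
  have hnonneg : 0 ≤ y ^ n / 2 ^ n := div_nonneg (hn.pow_nonneg y) (by positivity)
  rw [add_assoc z, add_halves, add_sub_cancel_right, div_pow] at hclarkson
  linarith

section Moments

open Finset.HasAntidiagonal (antidiagonal)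

variable {Ω : Type*} {mΩ : MeasurableSpace Ω} {μ : Measure Ω} {Y Z : Ω → ℝ} {n : ℕ}

theorem integrable_pow_of_memLp [IsFiniteMeasure μ] (hY : MemLp Y n μ) {k : ℕ} (hk : k ≤ n) :
    Integrable (fun ω => Y ω ^ k) μ := by
  have hYk : MemLp Y k μ := hY.mono_exponent (Nat.cast_le.mpr hk)
  refine (integrable_norm_iff (hYk.aestronglyMeasurable.pow k)).mp ?_
  simpa using hYk.integrable_norm_pow'

theorem integral_add_pow_of_indepFun [IsFiniteMeasure μ] (hZ : MemLp Z n μ) (hY : MemLp Y n μ)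
    (hindep : IndepFun Z Y μ) {k : ℕ} (hk : k ≤ n) :
    ∫ ω, (Z + Y) ω ^ k ∂μ = ∑ p ∈ antidiagonal k,
      (k.choose p.1 : ℝ) * ((∫ ω, Z ω ^ p.1 ∂μ) * ∫ ω, Y ω ^ p.2 ∂μ) := by
  have hpow (i j : ℕ) : IndepFun (fun ω => Z ω ^ i) (fun ω => Y ω ^ j) μ :=
    hindep.comp (measurable_id.pow_const i) (measurable_id.pow_const j)
  have hZint : ∀ p ∈ antidiagonal k, Integrable (fun ω => Z ω ^ p.1) μ := fun p hp =>
    integrable_pow_of_memLp hZ ((Finset.HasAntidiagonal.antidiagonal.fst_le hp).trans hk)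
  have hYint : ∀ p ∈ antidiagonal k, Integrable (fun ω => Y ω ^ p.2) μ := fun p hp =>
    integrable_pow_of_memLp hY ((Finset.HasAntidiagonal.antidiagonal.snd_le hp).trans hk)
  simp only [Pi.add_apply, fun ω => (Commute.all (Z ω) (Y ω)).add_pow' k, nsmul_eq_mul]
  rw [integral_finsetSum]
  · refine Finset.sum_congr rfl fun p hp => ?_
    rw [integral_const_mul, (hpow p.1 p.2).integral_fun_mul_eq_mul_integral
      (hZint p hp).aestronglyMeasurable (hYint p hp).aestronglyMeasurable]
  · exact fun p hp => ((hpow p.1 p.2).integrable_mul (hZint p hp) (hYint p hp)).const_mul _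

theorem integral_pow_le_two_pow_mul_sub_of_indepFun [IsFiniteMeasure μ] (hn : Even n) (hn0 : n ≠ 0)
    (hZ : MemLp Z n μ) (hY : MemLp Y n μ) (hindep : IndepFun Z Y μ) (hY0 : ∫ ω, Y ω ∂μ = 0) :
    ∫ ω, Y ω ^ n ∂μ ≤ 2 ^ n * (∫ ω, (Z + Y) ω ^ n ∂μ - ∫ ω, Z ω ^ n ∂μ) := by
  have hY1 : Integrable Y μ := by
    simpa using integrable_pow_of_memLp hY (Nat.one_le_iff_ne_zero.mpr hn0)
  have hZ1 : Integrable (fun ω => Z ω ^ (n - 1)) μ := integrable_pow_of_memLp hZ (n.sub_le 1)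
  have hpow : IndepFun (fun ω => Z ω ^ (n - 1)) Y μ :=
    hindep.comp (measurable_id.pow_const (n - 1)) measurable_id
  have hcross : ∫ ω, Z ω ^ (n - 1) * Y ω ∂μ = 0 := by
    rw [hpow.integral_fun_mul_eq_mul_integral hZ1.aestronglyMeasurable hY1.aestronglyMeasurable,
      hY0, mul_zero]
  have hZn : Integrable (fun ω => Z ω ^ n) μ := integrable_pow_of_memLp hZ le_rfl
  have hcross_int : Integrable (fun ω => n * (Z ω ^ (n - 1) * Y ω)) μ :=
    (hpow.integrable_mul hZ1 hY1).const_mul _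
  have hYn : Integrable (fun ω => Y ω ^ n / 2 ^ n) μ :=
    (integrable_pow_of_memLp hY le_rfl).div_const _
  have hmono := integral_mono ((hZn.add hcross_int).add hYn)
    (integrable_pow_of_memLp (hZ.add hY) le_rfl)
    fun ω => pow_add_mul_add_pow_div_two_pow_le hn hn0 (Z ω) (Y ω)
  rw [integral_add' (hZn.add hcross_int) hYn, integral_add' hZn hcross_int, integral_const_mul,
    hcross, mul_zero, add_zero, integral_div] at hmono
  rwa [← div_le_iff₀' (by positivity), le_sub_iff_add_le']

/-- The sum `E[Y ^ 2] + E[Y ^ n]`. For even `n ≥ 2` it dominates the moments of `Y` of every order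
from `2` to `n`, and serves as the size of an increment of the process. -/
noncomputable def momentSum (Y : Ω → ℝ) (n : ℕ) (μ : Measure Ω) : ℝ :=
  ∫ ω, Y ω ^ 2 ∂μ + ∫ ω, Y ω ^ n ∂μ

theorem momentSum_nonneg (hn : Even n) : 0 ≤ momentSum Y n μ :=
  add_nonneg (integral_nonneg fun _ => sq_nonneg _) (integral_nonneg fun _ => hn.pow_nonneg _)

theorem abs_integral_pow_le_momentSum [IsFiniteMeasure μ] (hn : Even n) (hY : MemLp Y n μ) {k : ℕ}
    (hk : 2 ≤ k) (hkn : k ≤ n) : |∫ ω, Y ω ^ k ∂μ| ≤ momentSum Y n μ := by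
  have hpow_le (y : ℝ) : |y ^ k| ≤ y ^ 2 + y ^ n := by
    rw [abs_pow, ← sq_abs y, ← hn.pow_abs y]
    rcases le_total |y| 1 with hy | hy
    · linarith [pow_le_pow_of_le_one (abs_nonneg y) hy hk, pow_nonneg (abs_nonneg y) n]
    · linarith [pow_le_pow_right₀ hy hkn, pow_nonneg (abs_nonneg y) 2]
  have hY2 := integrable_pow_of_memLp hY (hk.trans hkn)
  have hYn := integrable_pow_of_memLp hY le_rfl
  calc |∫ ω, Y ω ^ k ∂μ| ≤ ∫ ω, |Y ω ^ k| ∂μ := abs_integral_le_integral_abs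
    _ ≤ ∫ ω, (Y ω ^ 2 + Y ω ^ n) ∂μ :=
        integral_mono (integrable_pow_of_memLp hY hkn).abs (hY2.add hYn) fun ω => hpow_le (Y ω)
    _ = momentSum Y n μ := integral_add hY2 hYn

theorem momentSum_le_two_pow_mul_sub_of_indepFun [IsFiniteMeasure μ] (hn : Even n) (hn2 : 2 ≤ n)
    (hZ : MemLp Z n μ) (hY : MemLp Y n μ) (hindep : IndepFun Z Y μ) (hY0 : ∫ ω, Y ω ∂μ = 0) :
    momentSum Y n μ ≤ 2 ^ n * (momentSum (Z + Y) n μ - momentSum Z n μ) := by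
  have h2n : (2 : ENNReal) ≤ n := mod_cast hn2
  have hsq : ∫ ω, Y ω ^ 2 ∂μ ≤ 2 ^ 2 * (∫ ω, (Z + Y) ω ^ 2 ∂μ - ∫ ω, Z ω ^ 2 ∂μ) :=
    integral_pow_le_two_pow_mul_sub_of_indepFun even_two two_ne_zero
      (hZ.mono_exponent h2n) (hY.mono_exponent h2n) hindep hY0
  have hsq_sub_nonneg : 0 ≤ ∫ ω, (Z + Y) ω ^ 2 ∂μ - ∫ ω, Z ω ^ 2 ∂μ :=
    nonneg_of_mul_nonneg_right ((integral_nonneg fun _ => sq_nonneg _).trans hsq) (by positivity)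
  calc momentSum Y n μ
      ≤ 2 ^ n * (∫ ω, (Z + Y) ω ^ 2 ∂μ - ∫ ω, Z ω ^ 2 ∂μ) +
          2 ^ n * (∫ ω, (Z + Y) ω ^ n ∂μ - ∫ ω, Z ω ^ n ∂μ) := by
        refine add_le_add (hsq.trans ?_)
          (integral_pow_le_two_pow_mul_sub_of_indepFun hn (by omega) hZ hY hindep hY0)
        gcongr
        exact one_le_two
    _ = 2 ^ n * (momentSum (Z + Y) n μ - momentSum Z n μ) := by
        simp only [momentSum]
        ring

theorem eLpNorm_natCast_eq_of_even (hn : Even n) (hn0 : n ≠ 0) (hY : MemLp Y n μ) :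
    eLpNorm Y n μ = ENNReal.ofReal ((∫ ω, Y ω ^ n ∂μ) ^ (n : ℝ)⁻¹) := by
  rw [hY.eLpNorm_eq_integral_rpow_norm (Nat.cast_ne_zero.mpr hn0) (ENNReal.natCast_ne_top n)]
  simp only [ENNReal.toReal_natCast, Real.rpow_natCast, Real.norm_eq_abs, hn.pow_abs]

variable {ι : Type*} {l : Filter ι} [l.IsCountablyGenerated] {f : ι → Ω → ℝ}

theorem integral_pow_le_of_tendstoInMeasure [l.NeBot] (hn : Even n) (hn0 : n ≠ 0)
    (hf : ∀ i, MemLp (f i) n μ) (hY : MemLp Y n μ) (hfY : TendstoInMeasure μ f l Y) {c : ℝ}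
    (hc : ∀ᶠ i in l, ∫ ω, f i ω ^ n ∂μ ≤ c) : ∫ ω, Y ω ^ n ∂μ ≤ c := by
  have integral_nonneg (g : Ω → ℝ) : 0 ≤ ∫ ω, g ω ^ n ∂μ :=
    integral_nonneg fun ω => hn.pow_nonneg (g ω)
  obtain ⟨i, hi⟩ := hc.exists
  have hc0 : 0 ≤ c := (integral_nonneg (f i)).trans hi
  have hbound : ∀ᶠ i in l, eLpNorm (f i) n μ ≤ ENNReal.ofReal (c ^ (n : ℝ)⁻¹) :=
    hc.mono fun i hi => by
      rw [eLpNorm_natCast_eq_of_even hn hn0 (hf i)]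
      gcongr
      exact integral_nonneg (f i)
  have hlimit := eLpNorm_le_of_tendstoInMeasure hbound hfY fun i => (hf i).aestronglyMeasurable
  rwa [eLpNorm_natCast_eq_of_even hn hn0 hY, ENNReal.ofReal_le_ofReal_iff (by positivity),
    Real.rpow_le_rpow_iff (integral_nonneg Y) hc0 (by positivity)] at hlimit

-- If the moments of `W - f i` stayed away from `0`, superadditivity would keep those of `f i` below
-- that of `W` by a fixed gap, contradicting Fatou's lemma.
theorem tendsto_integral_sub_pow_of_indepFun [IsFiniteMeasure μ] {W : Ω → ℝ} (hn : Even n)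
    (hn0 : n ≠ 0) (hW : MemLp W n μ) (hf : ∀ i, MemLp (f i) n μ) (hfW : TendstoInMeasure μ f l W)
    (hindep : ∀ᶠ i in l, IndepFun (f i) (W - f i) μ) (hcent : ∀ i, ∫ ω, (W - f i) ω ∂μ = 0) :
    Tendsto (fun i => ∫ ω, (W - f i) ω ^ n ∂μ) l (𝓝 0) := by
  refine (tendsto_order.mpr ⟨fun δ hδ => ?_, fun δ hδ => ?_⟩)
  · exact .of_forall fun i => hδ.trans_le (integral_nonneg fun ω => hn.pow_nonneg _)
  · by_contra hfreq
    set l' := l ⊓ 𝓟 {i | ¬∫ ω, (W - f i) ω ^ n ∂μ < δ}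
    have : l'.NeBot := frequently_iff_neBot.mp (not_eventually.mp hfreq)
    have hgap : ∀ᶠ i in l', ∫ ω, f i ω ^ n ∂μ ≤ ∫ ω, W ω ^ n ∂μ - δ / 2 ^ n := by
      filter_upwards [hindep.filter_mono inf_le_left, mem_inf_of_right (mem_principal_self _)]
        with i hi hδi
      have hsuper := integral_pow_le_two_pow_mul_sub_of_indepFun hn hn0 (hf i) (hW.sub (hf i)) hi
        (hcent i)
      rw [add_sub_cancel] at hsuper
      have := (div_le_iff₀' (by positivity)).mpr ((not_lt.mp hδi).trans hsuper)
      linarith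
    have hfatou := integral_pow_le_of_tendstoInMeasure hn hn0 hf hW (hfW.mono inf_le_left) hgap
    linarith [show 0 < δ / 2 ^ n by positivity]

end Moments

/-- The real numbers `κ 1, …, κ n` are the cumulants of `Y`, in the sense that the moments of `Y`
of order at most `n` are the Kendall polynomials in them. The remaining values of `κ` are
irrelevant; the case `k = 0` normalizes the total mass of `μ`. -/
def HasCumulants {Ω : Type*} [MeasurableSpace Ω] (Y : Ω → ℝ) (n : ℕ) (κ : ℕ → ℝ)
    (μ : Measure Ω) : Prop :=
  ∀ k ≤ n, ∫ ω, Y ω ^ k ∂μ = kendall k κ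

section HasCumulants

variable {Ω : Type*} {mΩ : MeasurableSpace Ω} {μ : Measure Ω} {Y Z : Ω → ℝ} {n : ℕ} {κ : ℕ → ℝ}

theorem HasCumulants.of_centered [IsProbabilityMeasure μ] (hY : ∫ ω, Y ω ∂μ = 0) (hκ : κ 1 = 0)
    (h : ∀ k, 2 ≤ k → k ≤ n → ∫ ω, Y ω ^ k ∂μ = kendall k κ) : HasCumulants Y n κ μ := by
  rintro (_ | _ | k) hk
  · simp [kendall_zero]
  · simp [kendall_one, hY, hκ]
  · exact h (k + 2) (by omega) hk

theorem HasCumulants.sub_of_indepFun [IsFiniteMeasure μ] {κ' : ℕ → ℝ} (hZ : MemLp Z n μ)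
    (hY : MemLp Y n μ) (hindep : IndepFun Z Y μ) (hκ : HasCumulants Z n κ μ)
    (hκ' : HasCumulants (Z + Y) n κ' μ) : HasCumulants Y n (κ' - κ) μ := by
  refine eq_of_sum_antidiagonal_choose_mul_eq (a := fun k => kendall k κ) (kendall_zero κ)
    fun k hk => ?_
  rw [← kendall_add, add_sub_cancel, ← hκ' k hk, integral_add_pow_of_indepFun hZ hY hindep hk]
  refine Finset.sum_congr rfl fun p hp => ?_
  rw [hκ p.1 ((Finset.HasAntidiagonal.antidiagonal.fst_le hp).trans hk)]

theorem HasCumulants.exists_abs_integral_pow_sub_le [IsFiniteMeasure μ] (hn : Even n)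
    (hn0 : n ≠ 0) :
    ∃ C : ℝ, ∀ (Y : Ω → ℝ) (κ : ℕ → ℝ), MemLp Y n μ → ∫ ω, Y ω ∂μ = 0 → HasCumulants Y n κ μ →
      momentSum Y n μ ≤ 1 → |∫ ω, Y ω ^ n ∂μ - κ n| ≤ C * momentSum Y n μ ^ 2 := by
  obtain ⟨C, hC⟩ := exists_abs_kendall_sub_le hn0
  refine ⟨C, fun Y κ hY hY0 hκ hd => ?_⟩
  rw [hκ n le_rfl]
  refine hC κ _ hd fun k hk hkn => ?_
  rw [← hκ k hkn]
  rcases hk.eq_or_lt with rfl | hk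
  · simpa only [pow_one, hY0, abs_zero] using momentSum_nonneg hn
  · exact abs_integral_pow_le_momentSum hn hY hk hkn

end HasCumulants

/-- A centered process in `L^n`, started at `0`, that is continuous in probability and whose
increments over any two adjacent intervals are independent. It is a centered additive process as far
as the cumulants of order at most `n` can tell. -/
structure IsCenteredAdditiveProcess {Ω : Type*} [MeasurableSpace Ω] (X : ℝ≥0 → Ω → ℝ) (n : ℕ)
    (μ : Measure Ω) : Prop where
  zero : X 0 = 0
  indepFun_sub_sub : ∀ ⦃s t u⦄, s ≤ t → t ≤ u → IndepFun (X t - X s) (X u - X t) μ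
  tendstoInMeasure : ∀ t, TendstoInMeasure μ X (𝓝 t) (X t)
  memLp : ∀ t, MemLp (X t) n μ
  integral_eq_zero : ∀ t, ∫ ω, X t ω ∂μ = 0

namespace IsCenteredAdditiveProcess

variable {Ω : Type*} {mΩ : MeasurableSpace Ω} {μ : Measure Ω} {X : ℝ≥0 → Ω → ℝ} {n : ℕ}

theorem of_indep_natural (hXmeas : ∀ t, StronglyMeasurable (X t)) (hX0 : ∀ ω, X 0 ω = 0)
    (hindep : ∀ s t : ℝ≥0, s ≤ t →
      Indep (MeasurableSpace.comap (fun ω => X t ω - X s ω) (inferInstance : MeasurableSpace ℝ))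
        (Filtration.natural X hXmeas s) μ)
    (hcontP : ∀ (t : ℝ≥0) (ε : ℝ), 0 < ε →
      Tendsto (fun s => μ {ω | ε ≤ |X s ω - X t ω|}) (𝓝 t) (𝓝 0))
    (hn0 : n ≠ 0) (hmom : ∀ t, Integrable (fun ω => |X t ω| ^ n) μ)
    (hcent : ∀ t, ∫ ω, X t ω ∂μ = 0) :
    IsCenteredAdditiveProcess X n μ where
  zero := funext hX0
  indepFun_sub_sub s t u hst htu := by
    have hpast (r : ℝ≥0) (hrt : r ≤ t) : Measurable[Filtration.natural X hXmeas t] (X r) :=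
      ((Filtration.stronglyAdapted_natural hXmeas r).mono
        ((Filtration.natural X hXmeas).mono hrt)).measurable
    exact (indep_of_indep_of_le_right (hindep t u htu)
      ((hpast t le_rfl).sub (hpast s hst)).comap_le).symm
  tendstoInMeasure t := tendstoInMeasure_iff_norm.mpr (hcontP t)
  memLp t := by
    rw [← integrable_norm_rpow_iff (hXmeas t).aestronglyMeasurable (Nat.cast_ne_zero.mpr hn0)
      (ENNReal.natCast_ne_top n)]
    simpa using hmom t
  integral_eq_zero := hcent

theorem mono [IsFiniteMeasure μ] (hX : IsCenteredAdditiveProcess X n μ) {k : ℕ} (hk : k ≤ n) :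
    IsCenteredAdditiveProcess X k μ :=
  { hX with memLp := fun t => (hX.memLp t).mono_exponent (Nat.cast_le.mpr hk) }

theorem memLp_sub (hX : IsCenteredAdditiveProcess X n μ) (s t : ℝ≥0) : MemLp (X t - X s) n μ :=
  (hX.memLp t).sub (hX.memLp s)

theorem integral_sub_eq_zero [IsFiniteMeasure μ] (hX : IsCenteredAdditiveProcess X n μ)
    (hn0 : n ≠ 0) (s t : ℝ≥0) : ∫ ω, (X t - X s) ω ∂μ = 0 := by
  have hint (u : ℝ≥0) : Integrable (X u) μ :=
    (hX.memLp u).integrable (Nat.one_le_cast.mpr (Nat.one_le_iff_ne_zero.mpr hn0))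
  rw [integral_sub' (hint t) (hint s), hX.integral_eq_zero, hX.integral_eq_zero, sub_zero]

theorem indepFun_sub (hX : IsCenteredAdditiveProcess X n μ) {s t : ℝ≥0} (hst : s ≤ t) :
    IndepFun (X s) (X t - X s) μ := by
  simpa [hX.zero] using hX.indepFun_sub_sub zero_le hst

theorem tendsto_integral_sub_pow_nhdsLT [IsFiniteMeasure μ] (hX : IsCenteredAdditiveProcess X n μ)
    (hn : Even n) (hn0 : n ≠ 0) (t : ℝ≥0) :
    Tendsto (fun s => ∫ ω, (X t - X s) ω ^ n ∂μ) (𝓝[<] t) (𝓝 0) :=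
  tendsto_integral_sub_pow_of_indepFun hn hn0 (hX.memLp t) hX.memLp
    ((hX.tendstoInMeasure t).mono nhdsWithin_le_nhds)
    (eventually_mem_nhdsWithin.mono fun _ hs => hX.indepFun_sub (le_of_lt hs))
    fun s => hX.integral_sub_eq_zero hn0 s t

theorem tendsto_integral_sub_pow_nhdsGT [IsFiniteMeasure μ] (hX : IsCenteredAdditiveProcess X n μ)
    (hn : Even n) (hn0 : n ≠ 0) (t : ℝ≥0) :
    Tendsto (fun s => ∫ ω, (X s - X t) ω ^ n ∂μ) (𝓝[>] t) (𝓝 0) := by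
  have hlim : TendstoInMeasure μ (fun s => X (t + 1) - X s) (𝓝[>] t) (X (t + 1) - X t) :=
    fun ε hε => by
      simpa [edist_sub_left] using (hX.tendstoInMeasure t).mono nhdsWithin_le_nhds ε hε
  have hindep : ∀ᶠ s in 𝓝[>] t,
      IndepFun (X (t + 1) - X s) (X (t + 1) - X t - (X (t + 1) - X s)) μ := by
    filter_upwards [Ioo_mem_nhdsGT (lt_add_one t)] with s hs
    rw [sub_sub_sub_cancel_left]
    exact (hX.indepFun_sub_sub hs.1.le hs.2.le).symm
  simpa only [sub_sub_sub_cancel_left] using tendsto_integral_sub_pow_of_indepFun hn hn0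
    (hX.memLp_sub t (t + 1)) (fun s => hX.memLp_sub s (t + 1)) hlim hindep
    fun s => by
      rw [sub_sub_sub_cancel_left]
      exact hX.integral_sub_eq_zero hn0 t s

variable [IsFiniteMeasure μ]

theorem tendsto_momentSum_sub_nhdsLT (hX : IsCenteredAdditiveProcess X n μ) (hn : Even n)
    (hn2 : 2 ≤ n) (t : ℝ≥0) : Tendsto (fun s => momentSum (X t - X s) n μ) (𝓝[<] t) (𝓝 0) := by
  simpa only [momentSum, add_zero] using
    ((hX.mono hn2).tendsto_integral_sub_pow_nhdsLT even_two two_ne_zero t).add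
      (hX.tendsto_integral_sub_pow_nhdsLT hn (by omega) t)

theorem tendsto_momentSum_sub_nhdsGT (hX : IsCenteredAdditiveProcess X n μ) (hn : Even n)
    (hn2 : 2 ≤ n) (t : ℝ≥0) : Tendsto (fun s => momentSum (X s - X t) n μ) (𝓝[>] t) (𝓝 0) := by
  simpa only [momentSum, add_zero] using
    ((hX.mono hn2).tendsto_integral_sub_pow_nhdsGT even_two two_ne_zero t).add
      (hX.tendsto_integral_sub_pow_nhdsGT hn (by omega) t)

theorem momentSum_sub_le (hX : IsCenteredAdditiveProcess X n μ) (hn : Even n) (hn2 : 2 ≤ n)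
    {s t : ℝ≥0} (hst : s ≤ t) :
    momentSum (X t - X s) n μ ≤ 2 ^ n * (momentSum (X t) n μ - momentSum (X s) n μ) := by
  simpa only [add_sub_cancel] using momentSum_le_two_pow_mul_sub_of_indepFun hn hn2 (hX.memLp s)
    (hX.memLp_sub s t) (hX.indepFun_sub hst) (hX.integral_sub_eq_zero (by omega) s t)

variable {F : ℕ → ℝ≥0 → ℝ}

theorem exists_sub_mul_momentSum_sq_le (hX : IsCenteredAdditiveProcess X n μ) (hn : Even n)
    (hn2 : 2 ≤ n) (hF : ∀ t, HasCumulants (X t) n (fun k => F k t) μ) :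
    ∃ C : ℝ, ∀ s t, s ≤ t → momentSum (X t - X s) n μ ≤ 1 →
      F n s - C * momentSum (X t - X s) n μ ^ 2 ≤ F n t := by
  obtain ⟨C, hC⟩ := HasCumulants.exists_abs_integral_pow_sub_le (μ := μ) hn (by omega)
  refine ⟨C, fun s t hst hsmall => ?_⟩
  have hincrement : HasCumulants (X t - X s) n ((fun k => F k t) - fun k => F k s) μ :=
    (hF s).sub_of_indepFun (hX.memLp s) (hX.memLp_sub s t) (hX.indepFun_sub hst)
      (by simpa only [add_sub_cancel] using hF t)
  have hmoment : 0 ≤ ∫ ω, (X t - X s) ω ^ n ∂μ := integral_nonneg fun ω => hn.pow_nonneg _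
  have habs := hC (X t - X s) _ (hX.memLp_sub s t) (hX.integral_sub_eq_zero (by omega) s t)
    hincrement hsmall
  rw [Pi.sub_apply] at habs
  linarith [(abs_le.mp habs).2]

theorem exists_cumulant_add_mul_momentSum_le (hX : IsCenteredAdditiveProcess X n μ) (hn : Even n)
    (hn2 : 2 ≤ n) (hF : ∀ t, HasCumulants (X t) n (fun k => F k t) μ) {ε : ℝ} (hε : 0 < ε) :
    ∃ δ > 0, ∀ s t, s ≤ t → momentSum (X t - X s) n μ < δ →
      F n s + ε * momentSum (X s) n μ ≤ F n t + ε * momentSum (X t) n μ := by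
  obtain ⟨C, hC⟩ := hX.exists_sub_mul_momentSum_sq_le hn hn2 hF
  refine ⟨min 1 (ε / 2 ^ n / (|C| + 1)), by positivity, fun s t hst hδ => ?_⟩
  have hF_le := hC s t hst (hδ.le.trans (min_le_left _ _))
  have hsuper := hX.momentSum_sub_le hn hn2 hst
  set d := momentSum (X t - X s) n μ
  have hd0 : 0 ≤ d := momentSum_nonneg hn
  have hCd : C * d ≤ ε / 2 ^ n := by
    calc C * d ≤ (|C| + 1) * d := by
          gcongr
          linarith [le_abs_self C]
      _ ≤ ε / 2 ^ n :=
          (le_div_iff₀' (by positivity)).mp (hδ.le.trans (min_le_right _ _))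
  have herror : C * d ^ 2 ≤ ε * (momentSum (X t) n μ - momentSum (X s) n μ) := by
    calc C * d ^ 2 = C * d * d := by ring
      _ ≤ ε / 2 ^ n * (2 ^ n * (momentSum (X t) n μ - momentSum (X s) n μ)) := by gcongr
      _ = ε * (momentSum (X t) n μ - momentSum (X s) n μ) := by field_simp
  linarith

theorem monotone_cumulant_add_mul_momentSum (hX : IsCenteredAdditiveProcess X n μ) (hn : Even n)
    (hn2 : 2 ≤ n) (hF : ∀ t, HasCumulants (X t) n (fun k => F k t) μ) {ε : ℝ} (hε : 0 < ε) :
    Monotone fun t => F n t + ε * momentSum (X t) n μ := by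
  obtain ⟨δ, hδ, hle⟩ := hX.exists_cumulant_add_mul_momentSum_le hn hn2 hF hε
  refine monotone_of_eventually_nhdsLT_of_eventually_nhdsGT (fun t => ?_) fun t => ?_
  · filter_upwards [self_mem_nhdsWithin,
      (hX.tendsto_momentSum_sub_nhdsLT hn hn2 t).eventually_lt_const hδ] with s hst hsmall
    exact hle s t (le_of_lt hst) hsmall
  · filter_upwards [self_mem_nhdsWithin,
      (hX.tendsto_momentSum_sub_nhdsGT hn hn2 t).eventually_lt_const hδ] with s hts hsmall
    exact hle t s (le_of_lt hts) hsmall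

end IsCenteredAdditiveProcess

theorem additive_cumulant_monotone_of_even_general {Ω : Type*} {mΩ : MeasurableSpace Ω}
    {μ : Measure Ω} [IsFiniteMeasure μ] {X : ℝ≥0 → Ω → ℝ} {n : ℕ}
    (hX : IsCenteredAdditiveProcess X n μ) (hn : 2 ≤ n) (heven : Even n) {F : ℕ → ℝ≥0 → ℝ}
    (hF : ∀ t, HasCumulants (X t) n (fun k => F k t) μ) : Monotone (F n) := by
  have hmono : ∀ᶠ ε in 𝓝[>] (0 : ℝ), Monotone fun t => F n t + ε * momentSum (X t) n μ :=
    eventually_mem_nhdsWithin.mono fun ε hε =>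
      hX.monotone_cumulant_add_mul_momentSum heven hn hF hε
  have hlim (t : ℝ≥0) :
      Tendsto (fun ε : ℝ => F n t + ε * momentSum (X t) n μ) (𝓝[>] 0) (𝓝 (F n t)) :=
    (Continuous.tendsto' (by fun_prop) _ _ (by simp)).mono_left nhdsWithin_le_nhds
  exact monotone_of_frequently_monotone_of_tendsto hmono.frequently hlim

/-- **Proposition 1 (monotonicity).** For even `n ≥ 2`, the cumulant function `F_n` of a
centered additive process with finite moments of all orders is nondecreasing. -/
theorem additive_cumulant_monotone_of_even
    {Ω : Type*} {mΩ : MeasurableSpace Ω} (μ : Measure Ω) [IsProbabilityMeasure μ]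
    (X : ℝ≥0 → Ω → ℝ) (hXmeas : ∀ t, StronglyMeasurable (X t))
    (hX0 : ∀ ω, X 0 ω = 0)
    (hindep : ∀ s t : ℝ≥0, s ≤ t →
      Indep (MeasurableSpace.comap (fun ω => X t ω - X s ω) (inferInstance : MeasurableSpace ℝ))
        (MeasureTheory.Filtration.natural X hXmeas s) μ)
    (hcontP : ∀ (t : ℝ≥0) (ε : ℝ), 0 < ε →
      Tendsto (fun s => μ {ω | ε ≤ |X s ω - X t ω|}) (𝓝 t) (𝓝 0))
    (hcadlag : ∀ ω, IsCadlag fun t => X t ω)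
    (hmom : ∀ (n : ℕ) (t : ℝ≥0), Integrable (fun ω => |X t ω| ^ n) μ)
    (hcent : ∀ t : ℝ≥0, ∫ ω, X t ω ∂μ = 0)
    (F : ℕ → ℝ≥0 → ℝ)
    (hF : ∀ n, 2 ≤ n → ∀ t : ℝ≥0,
      ∫ ω, X t ω ^ n ∂μ = kendall n fun k => if k = 1 then 0 else F k t)
    (n : ℕ) (hn : 2 ≤ n) (heven : Even n) :
    Monotone (F n) := by
  have hX : IsCenteredAdditiveProcess X n μ :=
    .of_indep_natural hXmeas hX0 hindep hcontP (by omega) (hmom n) hcent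
  have hκ (t : ℝ≥0) : HasCumulants (X t) n (fun k => if k = 1 then 0 else F k t) μ :=
    .of_centered (hcent t) (if_pos rfl) fun k hk _ => hF k hk t
  simpa [show n ≠ 1 by omega] using additive_cumulant_monotone_of_even_general hX hn heven hκ
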